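/- arXiv:1806.09859 — 4 statements merged into one kernel-verified Lean document; each statement's English description precedes it below -/
import Mathlib

section
/- Let α > 0, σ > 0, h > 0, P_peak > 0, ξ > 0, and λ ∈ [0, 1]. The function f(s) = (1−λ) · (α/2) · log₂(1 + 2 s h/(α σ²)) − ξ s attains its maximum over the interval [0, (α/2) P_peak] at the point s* = (α/2) · min{ max( (1−λ)/(ξ ln 2) − σ²/h, 0 ), P_peak }. -/
theorem core_aux (a c P p : ℝ) (ha : 0 ≤ a) (hc : 0 < c) (hP : 0 < P) (hp0 : 0 ≤ p)
    (hpP : p ≤ P) : a * Real.log (1 + p / c) - p ≤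
      a * Real.log (1 + (min (max (a - c) 0) P) / c) - min (max (a - c) 0) P := by
  have hq0 : 0 ≤ min (max (a - c) 0) P := le_min (le_max_right _ _) hP.le
  have key : (p - min (max (a - c) 0) P) * (a - (c + min (max (a - c) 0) P)) ≤ 0 := by
    rcases le_total (max (a - c) 0) P with h1 | h1
    · rw [min_eq_left h1]
      rcases le_total (a - c) 0 with h2 | h2
      · rw [max_eq_right h2]; nlinarith
      · rw [max_eq_left h2]; nlinarith
    · rw [min_eq_right h1]
      rcases le_max_iff.1 h1 with h2 | h2
      · nlinarith
      · linarith
  generalize min (max (a - c) 0) P = q at *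
  have e : ∀ x, 1 + x / c = (c + x) / c := fun x => by field_simp
  rw [e, e, Real.log_div (by positivity) hc.ne', Real.log_div (by positivity) hc.ne']
  have hcq : 0 < c + q := by positivity
  have hl := Real.log_le_sub_one_of_pos (show 0 < (c + p) / (c + q) by positivity)
  rw [Real.log_div (by positivity) hcq.ne'] at hl
  have h3 := mul_le_mul_of_nonneg_left hl ha
  have h4 : a * ((c + p) / (c + q) - 1) ≤ p - q := by
    have : a * ((c + p) / (c + q) - 1) = (p - q) + (p - q) * (a - (c + q)) / (c + q) := by
      field_simp
      ring
    rw [this]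
    have := div_nonpos_of_nonpos_of_nonneg key hcq.le
    linarith
  linarith

/-- Closed-form maximizer of the per-pair Lagrangian term for the relay transmit energy
(equation (36), case `k = K`) in the TDMA problem:
`f s = (1−λ) (α/2) log₂(1 + 2 s h/(α σ²)) − ξ s` is maximized over `[0, (α/2) P_peak]` at
`s* = (α/2) · min (max ((1−λ)/(ξ ln 2) − σ²/h) 0) P_peak`. -/
theorem stmt_4 (α σ h Ppeak ξ lam : ℝ) (hα : 0 < α) (hσ : 0 < σ) (hh : 0 < h)
    (hPpeak : 0 < Ppeak) (hξ : 0 < ξ) (hlam0 : 0 ≤ lam) (hlam1 : lam ≤ 1) :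
    let f : ℝ → ℝ := fun s =>
      (1 - lam) * (α / 2) * Real.logb 2 (1 + 2 * s * h / (α * σ ^ 2)) - ξ * s
    let sStar : ℝ := (α / 2) * min (max ((1 - lam) / (ξ * Real.log 2) - σ ^ 2 / h) 0) Ppeak
    sStar ∈ Set.Icc (0 : ℝ) ((α / 2) * Ppeak) ∧
      IsMaxOn f (Set.Icc (0 : ℝ) ((α / 2) * Ppeak)) sStar := by
  intro f sStar
  have hL : 0 < Real.log 2 := Real.log_pos (by norm_num)
  have hq0 : 0 ≤ min (max ((1 - lam) / (ξ * Real.log 2) - σ ^ 2 / h) 0) Ppeak :=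
    le_min (le_max_right _ _) hPpeak.le
  refine ⟨⟨by positivity, mul_le_mul_of_nonneg_left (min_le_right _ _) (by positivity)⟩, ?_⟩
  have hf : ∀ p, f (α / 2 * p) = ξ * (α / 2) *
      ((1 - lam) / (ξ * Real.log 2) * Real.log (1 + p / (σ ^ 2 / h)) - p) := by
    intro p
    have : 1 + 2 * (α / 2 * p) * h / (α * σ ^ 2) = 1 + p / (σ ^ 2 / h) := by
      field_simp
    simp only [f, this, Real.logb]
    field_simp
  intro s hs
  obtain ⟨p, rfl⟩ : ∃ p, s = α / 2 * p := ⟨s / (α / 2), by field_simp⟩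
  have h2 : 0 < α / 2 := by positivity
  have hp0 : 0 ≤ p := nonneg_of_mul_nonneg_right hs.1 h2
  have hpP : p ≤ Ppeak := le_of_mul_le_mul_left hs.2 h2
  show f (α / 2 * p) ≤ f (α / 2 * _)
  rw [hf, hf]
  exact mul_le_mul_of_nonneg_left (core_aux _ _ _ _
    (div_nonneg (by linarith) (by positivity)) (by positivity) hPpeak hp0 hpP) (by positivity)
end

section
/- Proposition 3. Let K ≥ 1, σ > 0, α₀ ∈ [0, 1), and A₁, …, A_K > 0. The maximum of Σ_{k=1}^K (α_k/2) · log₂(1 + 2 A_k/(α_k σ²)) over all α₁, …, α_K ≥ 0 with Σ_{k=1}^K α_k ≤ 1 − α₀ (with the k-th summand interpreted as 0 when α_k = 0) is attained at α_k* = A_k · (1 − α₀) / (Σ_{j=1}^K A_j), and the maximum value equals ((1 − α₀)/2) · log₂(1 + 2 (Σ_{j=1}^K A_j)/((1 − α₀) σ²)). -/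
/-- Proposition 3: the sum of first-hop rates `Σ (α_k/2) log₂(1 + 2 A_k/(α_k σ²))`
(the `k`-th summand interpreted as `0` when `α_k = 0`) over `α_k ≥ 0` with
`Σ α_k ≤ 1 − α₀` is maximized at `α_k* = A_k (1 − α₀) / Σ_j A_j`, with maximum value
`((1 − α₀)/2) log₂(1 + 2 (Σ_j A_j)/((1 − α₀) σ²))`. -/
theorem stmt_7 (K : ℕ) (hK : 1 ≤ K) (σ α₀ : ℝ) (hσ : 0 < σ)
    (hα₀0 : 0 ≤ α₀) (hα₀1 : α₀ < 1) (A : Fin K → ℝ) (hA : ∀ k, 0 < A k) :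
    let R : ℝ → ℝ → ℝ := fun a Ak =>
      if a = 0 then 0 else (a / 2) * Real.logb 2 (1 + 2 * Ak / (a * σ ^ 2))
    let αStar : Fin K → ℝ := fun k => A k * (1 - α₀) / (∑ j, A j)
    let V : ℝ := ((1 - α₀) / 2) * Real.logb 2 (1 + 2 * (∑ j, A j) / ((1 - α₀) * σ ^ 2))
    (∀ k, 0 ≤ αStar k) ∧ (∑ k, αStar k) ≤ 1 - α₀ ∧
    (∑ k, R (αStar k) (A k)) = V ∧
    (∀ α : Fin K → ℝ, (∀ k, 0 ≤ α k) → (∑ k, α k) ≤ 1 - α₀ →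
      (∑ k, R (α k) (A k)) ≤ V) := by
  intro R αStar V
  have : Nonempty (Fin K) := ⟨⟨0, hK⟩⟩
  have hS : 0 < ∑ j, A j := Finset.sum_pos (fun k _ => hA k) Finset.univ_nonempty
  have hT : 0 < 1 - α₀ := by linarith
  have hs2 : 0 < σ ^ 2 := by positivity
  have hpos : ∀ k, 0 < αStar k := fun k => div_pos (mul_pos (hA k) hT) hS
  have hsum : ∑ k, αStar k = 1 - α₀ := by
    simp only [αStar]
    rw [← Finset.sum_div, ← Finset.sum_mul]
    field_simp
  refine ⟨fun k => (hpos k).le, hsum.le, ?_, ?_⟩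
  · have h1 : ∀ k, R (αStar k) (A k) = αStar k *
        (Real.logb 2 (1 + 2 * (∑ j, A j) / ((1 - α₀) * σ ^ 2)) / 2) := by
      intro k
      have hne := (hpos k).ne'
      have hAk := (hA k).ne'
      have he : 2 * A k / (αStar k * σ ^ 2) = 2 * (∑ j, A j) / ((1 - α₀) * σ ^ 2) := by
        simp only [αStar]
        field_simp
      simp only [R, if_neg hne, he]
      ring
    rw [Finset.sum_congr rfl (fun k _ => h1 k), ← Finset.sum_mul, hsum]
    simp only [V]
    ring
  · intro α hα hle
    obtain ⟨u, hu⟩ : ∃ u, u = 1 + 2 * (∑ j, A j) / ((1 - α₀) * σ ^ 2) := ⟨_, rfl⟩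
    have hu0 : 0 < u := by rw [hu]; positivity
    have hl2 : 0 < Real.log 2 := Real.log_pos (by norm_num)
    have hc : 0 ≤ Real.log u + u⁻¹ - 1 := by
      have := Real.one_sub_inv_le_log_of_pos hu0
      linarith
    have h1 : ∀ k, R (α k) (A k) ≤
        (α k * (Real.log u + u⁻¹ - 1) + A k * (2 / σ ^ 2 * u⁻¹)) / (2 * Real.log 2) := by
      intro k
      have hAk := hA k
      rw [le_div_iff₀ (by positivity)]
      by_cases h0 : α k = 0
      · simp only [R, h0, if_true]
        have : 0 ≤ A k * (2 / σ ^ 2 * u⁻¹) := by positivity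
        linarith
      · have ha : 0 < α k := lt_of_le_of_ne (hα k) (Ne.symm h0)
        have hy : 0 < 1 + 2 * A k / (α k * σ ^ 2) := by positivity
        have hlog := Real.log_le_sub_one_of_pos (div_pos hy hu0)
        rw [Real.log_div hy.ne' hu0.ne'] at hlog
        have e1 : R (α k) (A k) * (2 * Real.log 2) =
            α k * Real.log (1 + 2 * A k / (α k * σ ^ 2)) := by
          simp only [R, if_neg h0, Real.logb]
          field_simp
        have e2 : α k * (Real.log u + ((1 + 2 * A k / (α k * σ ^ 2)) / u - 1)) =
            α k * (Real.log u + u⁻¹ - 1) + A k * (2 / σ ^ 2 * u⁻¹) := by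
          field_simp
          ring
        rw [e1, ← e2]
        exact mul_le_mul_of_nonneg_left (by linarith) ha.le
    refine (Finset.sum_le_sum (fun k _ => h1 k)).trans ?_
    rw [← Finset.sum_div, Finset.sum_add_distrib, ← Finset.sum_mul, ← Finset.sum_mul,
      div_le_iff₀ (by positivity)]
    have e3 : V * (2 * Real.log 2) = (1 - α₀) * Real.log u := by
      simp only [V, Real.logb, ← hu]
      field_simp
    have e4 : (∑ j, A j) * (2 / σ ^ 2 * u⁻¹) = (1 - α₀) * (1 - u⁻¹) := by
      have : (1 - α₀) * (u - 1) = (∑ j, A j) * (2 / σ ^ 2) := by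
        rw [hu]
        field_simp
        ring
      rw [← mul_assoc, ← this]
      field_simp
    rw [e3, e4]
    have := mul_le_mul_of_nonneg_right hle hc
    linarith
end

section
/- Proposition 1 (TDMA, unbounded peak power). Consider Problem (P1') without the peak power constraints. Let (α₀, α₁, …, α_K, s₀, …, s_K, m₁, …, m_K) be any feasible point with 0 < α₀ < 1, and let α₀' satisfy 0 < α₀' < α₀. Set t = (1 − α₀')/(1 − α₀) ≥ 1. Then the point (α₀', t α₁, …, t α_K, s₀, …, s_K, m₁, …, m_K) is also feasible, and its sum-rate is greater than or equal to the sum-rate of the original point. Consequently, the supremum of the sum-rate is approached as the WPT time α₀ tends to 0. -/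
open Finset

/-- Per-pair decode-and-forward rate in Problem (P1') (TDMA, energy variables):
time fraction `a`, source transmit energy `mk` (first-hop gain `h1k`), relay transmit
energy `sk` (second-hop gain `h2k`), noise power `σ²`; the rate is `0` when `a = 0`. -/
noncomputable def tdmaRate (σ a mk h1k sk h2k : ℝ) : ℝ :=
  if a = 0 then 0
  else (a / 2) * min (Real.logb 2 (1 + 2 * mk * h1k / (a * σ ^ 2)))
                     (Real.logb 2 (1 + 2 * sk * h2k / (a * σ ^ 2)))

theorem logb_scale_aux (x t : ℝ) (hx : 0 ≤ x) (ht : 1 ≤ t) :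
    Real.logb 2 (1 + x) ≤ t * Real.logb 2 (1 + x / t) := by
  have ht0 : 0 < t := by linarith
  have hd : 0 ≤ x / t := by positivity
  have hb := one_add_mul_self_le_rpow_one_add (s := x / t) (by linarith) ht
  rw [mul_div_cancel₀ x ht0.ne'] at hb
  rw [← Real.logb_rpow_eq_mul_logb_of_pos (by linarith)]
  exact Real.logb_le_logb_of_le (by norm_num) (by linarith) hb

theorem tdmaRate_scale_aux (σ a mk h1k sk h2k t : ℝ) (ha : 0 ≤ a) (hm : 0 ≤ mk)
    (h1 : 0 ≤ h1k) (hs : 0 ≤ sk) (h2 : 0 ≤ h2k) (ht : 1 ≤ t) :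
    tdmaRate σ a mk h1k sk h2k ≤ tdmaRate σ (t * a) mk h1k sk h2k := by
  have ht0 : 0 < t := by linarith
  unfold tdmaRate
  by_cases h0 : a = 0
  · simp [h0]
  rw [if_neg h0, if_neg (mul_ne_zero ht0.ne' h0)]
  have e : ∀ y : ℝ, y / (t * a * σ ^ 2) = y / (a * σ ^ 2) / t := by
    intro y
    rw [div_div]
    congr 1
    ring
  rw [e, e, show t * a / 2 = (a / 2) * t by ring, mul_assoc (a / 2) t, mul_min_of_nonneg _ _ ht0.le]
  apply mul_le_mul_of_nonneg_left _ (by positivity)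
  exact min_le_min (logb_scale_aux _ _ (by positivity) ht) (logb_scale_aux _ _ (by positivity) ht)

/-- Proposition 1 (TDMA, unbounded peak power).  For any feasible point of Problem (P1')
without peak power constraints with `0 < α₀ < 1`, and any `0 < α₀' < α₀`, setting
`t = (1 − α₀')/(1 − α₀) ≥ 1`, the rescaled point `(α₀', t α₁, …, t α_K, s, m)` is also
feasible and its sum-rate is at least the original sum-rate. -/
theorem stmt_10
    (K : ℕ) (hK : 1 ≤ K) (σ η P : ℝ) (hσ : 0 < σ) (hη0 : 0 < η) (hη1 : η < 1) (hP : 0 < P)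
    (gr : Fin K → ℝ) (hgr : ∀ k, 0 < gr k)
    (g : Fin K → Fin K → ℝ) (hg : ∀ i k, 0 ≤ g i k)
    (h1 h2 : Fin K → ℝ) (hh1 : ∀ k, 0 < h1 k) (hh2 : ∀ k, 0 < h2 k)
    (Ec : Fin K → ℝ) (hEc : ∀ k, 0 ≤ Ec k)
    -- a feasible point of Problem (P1') (no peak power constraints)
    (α₀ : ℝ) (α : Fin K → ℝ) (s₀ : ℝ) (s m : Fin K → ℝ)
    (hα₀pos : 0 < α₀) (hα₀lt1 : α₀ < 1)
    (hαnn : ∀ k, 0 ≤ α k) (htime : α₀ + ∑ k, α k ≤ 1)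
    (hs₀ : 0 ≤ s₀) (hs : ∀ k, 0 ≤ s k) (henergy : s₀ + ∑ k, s k ≤ P)
    (hm : ∀ k, 0 ≤ m k)
    (hcaus : ∀ k, m k + Ec k ≤
      η * ((s₀ + ∑ i ∈ univ.filter (fun i => i < k), s i) * gr k
            + ∑ i ∈ univ.filter (fun i => i < k), m i * g i k))
    -- a smaller WPT time
    (α₀' : ℝ) (hα₀'pos : 0 < α₀') (hα₀'lt : α₀' < α₀) :
    let t : ℝ := (1 - α₀') / (1 - α₀)
    -- `t ≥ 1` and the rescaled point is feasible
    1 ≤ t ∧ (∀ k, 0 ≤ t * α k) ∧ α₀' + ∑ k, t * α k ≤ 1 ∧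
    -- the sum-rate does not decrease
    (∑ k, tdmaRate σ (α k) (m k) (h1 k) (s k) (h2 k)) ≤
      ∑ k, tdmaRate σ (t * α k) (m k) (h1 k) (s k) (h2 k) := by
  intro t
  have hpos : 0 < 1 - α₀ := by linarith
  have ht : 1 ≤ t := (one_le_div hpos).2 (by linarith)
  have ht0 : 0 ≤ t := by linarith
  refine ⟨ht, fun k => mul_nonneg ht0 (hαnn k), ?_, ?_⟩
  · rw [← Finset.mul_sum]
    have h : t * ∑ k, α k ≤ t * (1 - α₀) := mul_le_mul_of_nonneg_left (by linarith) ht0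
    have h' : t * (1 - α₀) = 1 - α₀' := div_mul_cancel₀ _ hpos.ne'
    linarith
  · exact Finset.sum_le_sum fun k _ => tdmaRate_scale_aux _ _ _ _ _ _ _ (hαnn k) (hm k)
      (hh1 k).le (hs k) (hh2 k).le ht
end

section
/- Proposition 5 (FDMA, finite peak power). Consider Problem (P2) in energy variables with peak power P_peak > 0. Let (α₀, α₁, x, s₀, {s_{k,n}}, {m_{k,n}}) be any feasible point with 0 < α₀, 0 < s₀ < α₀ P_peak (i.e., WPT power p₀ = s₀/α₀ strictly below P_peak). Set α̃₀ = s₀/P_peak and α̃₁ = 1 − α̃₀ ≥ α₁. Then the point (α̃₀, α̃₁, x, s₀, {s_{k,n}}, {m_{k,n}}) is feasible, satisfies s₀ = α̃₀ P_peak (i.e., WPT power equal to P_peak), and its sum-rate is greater than or equal to the sum-rate of the original point. Hence the maximum sum-rate of Problem (P2) is achieved with p₀* = P_peak. -/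
open Finset

/-- Rate of pair `k` on a subcarrier in Problem (P2) (FDMA, energy variables), over `N`
subcarriers: WIT time fraction `a₁`, source energy `mkn` (first-hop gain `h1kn`),
relay energy `skn` (second-hop gain `h2kn`), noise power `σ²`; the rate is `0` when
`a₁ = 0`. -/
noncomputable def fdmaRate (N : ℕ) (σ a₁ mkn h1kn skn h2kn : ℝ) : ℝ :=
  if a₁ = 0 then 0
  else (a₁ / (2 * N)) * min (Real.logb 2 (1 + 2 * mkn * h1kn / (a₁ * σ ^ 2)))
                            (Real.logb 2 (1 + 2 * skn * h2kn / (a₁ * σ ^ 2)))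

theorem aux_log (a b c : ℝ) (ha : 0 < a) (hab : a ≤ b) (hc : 0 ≤ c) :
    a * Real.logb 2 (1 + c / a) ≤ b * Real.logb 2 (1 + c / b) := by
  have hb : 0 < b := lt_of_lt_of_le ha hab
  have hca : 0 ≤ c / a := by positivity
  have h1 : (1 + c / a) ^ (a / b) ≤ 1 + (a / b) * (c / a) :=
    rpow_one_add_le_one_add_mul_self (by linarith) (by positivity)
      ((div_le_one hb).2 hab)
  have h2 : (a / b) * (c / a) = c / b := by field_simp
  rw [h2] at h1
  have h3 := Real.logb_le_logb_of_le (b := 2) (by norm_num) (by positivity) h1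
  rw [Real.logb_rpow_eq_mul_logb_of_pos (by positivity)] at h3
  have h4 := mul_le_mul_of_nonneg_left h3 hb.le
  have h5 : b * (a / b * Real.logb 2 (1 + c / a)) = a * Real.logb 2 (1 + c / a) := by
    field_simp
  rwa [h5] at h4

theorem aux_rate (N : ℕ) (σ a b m h s g : ℝ) (hσ : 0 < σ) (ha : 0 ≤ a) (hab : a ≤ b)
    (hm : 0 ≤ m) (hh : 0 ≤ h) (hs : 0 ≤ s) (hg : 0 ≤ g) :
    fdmaRate N σ a m h s g ≤ fdmaRate N σ b m h s g := by
  have key : ∀ t, 0 < t → fdmaRate N σ t m h s g =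
      (1 / (2 * (N : ℝ))) * min (t * Real.logb 2 (1 + (2 * m * h / σ ^ 2) / t))
        (t * Real.logb 2 (1 + (2 * s * g / σ ^ 2) / t)) := by
    intro t ht
    rw [fdmaRate, if_neg ht.ne', ← mul_min_of_nonneg _ _ ht.le, div_div, div_div,
      mul_comm (σ ^ 2) t]
    ring
  rcases ha.eq_or_lt with h0 | h0
  · subst h0
    rcases hab.eq_or_lt with hb | hb
    · subst hb; exact le_rfl
    · rw [key b hb, fdmaRate, if_pos rfl]
      refine mul_nonneg (by positivity) (le_min ?_ ?_)
      · refine mul_nonneg hb.le (Real.logb_nonneg (by norm_num) ?_)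
        have : 0 ≤ 2 * m * h / σ ^ 2 / b := by positivity
        linarith
      · refine mul_nonneg hb.le (Real.logb_nonneg (by norm_num) ?_)
        have : 0 ≤ 2 * s * g / σ ^ 2 / b := by positivity
        linarith
  · rw [key a h0, key b (h0.trans_le hab)]
    refine mul_le_mul_of_nonneg_left (min_le_min ?_ ?_) (by positivity)
    · exact aux_log _ _ _ h0 hab (by positivity)
    · exact aux_log _ _ _ h0 hab (by positivity)

/-- Proposition 5 (FDMA, finite peak power).  For any feasible point of Problem (P2) with
peak power `P_peak` such that `0 < α₀` and `0 < s₀ < α₀ P_peak`, setting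
`α̃₀ = s₀/P_peak` and `α̃₁ = 1 − α̃₀ ≥ α₁`, the point `(α̃₀, α̃₁, x, s₀, s, m)` is
feasible, uses WPT power exactly `P_peak` (i.e. `s₀ = α̃₀ P_peak`), and its sum-rate is
at least the original one; hence the maximum sum-rate is achieved with `p₀* = P_peak`. -/
theorem stmt_13
    (K N : ℕ) (hK : 1 ≤ K) (hN : 1 ≤ N)
    (σ η P Ppeak : ℝ) (hσ : 0 < σ) (hη0 : 0 < η) (hη1 : η < 1)
    (hP : 0 < P) (hPpeak : 0 < Ppeak)
    (gr : Fin K → ℝ) (hgr : ∀ k, 0 < gr k)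
    (h1 h2 : Fin K → Fin N → ℝ) (hh1 : ∀ k n, 0 < h1 k n) (hh2 : ∀ k n, 0 < h2 k n)
    (Ec : Fin K → ℝ) (hEc : ∀ k, 0 ≤ Ec k)
    -- a feasible point of Problem (P2) with peak power constraints
    (α₀ α₁ : ℝ) (x : Fin K → Fin N → ℝ) (s₀ : ℝ) (s m : Fin K → Fin N → ℝ)
    (hα₀pos : 0 < α₀) (hα₁nn : 0 ≤ α₁) (htime : α₀ + α₁ ≤ 1)
    (hx01 : ∀ k n, x k n = 0 ∨ x k n = 1) (hxsum : ∀ n, ∑ k, x k n ≤ 1)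
    (hs₀pos : 0 < s₀) (hs : ∀ k n, 0 ≤ s k n)
    (henergy : s₀ + ∑ k, ∑ n, s k n ≤ P)
    (hs₀peak : s₀ < α₀ * Ppeak) (hspeak : ∀ k n, s k n ≤ (α₁ / 2) * Ppeak)
    (hm : ∀ k n, 0 ≤ m k n)
    (hcaus : ∀ k, (∑ n, m k n) + Ec k ≤ η * s₀ * gr k) :
    let α₀' : ℝ := s₀ / Ppeak
    let α₁' : ℝ := 1 - α₀'
    -- the new point uses full peak power for WPT and is feasible
    α₁ ≤ α₁' ∧ 0 < α₀' ∧ s₀ = α₀' * Ppeak ∧ α₀' + α₁' ≤ 1 ∧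
    (∀ k n, s k n ≤ (α₁' / 2) * Ppeak) ∧
    -- the sum-rate does not decrease
    (∑ k, ∑ n, x k n * fdmaRate N σ α₁ (m k n) (h1 k n) (s k n) (h2 k n)) ≤
      ∑ k, ∑ n, x k n * fdmaRate N σ α₁' (m k n) (h1 k n) (s k n) (h2 k n) := by
  intro α₀' α₁'
  have h0 : α₀' < α₀ := (div_lt_iff₀ hPpeak).2 hs₀peak
  have hle : α₁ ≤ α₁' := by
    change α₁ ≤ 1 - α₀'
    linarith
  refine ⟨hle, div_pos hs₀pos hPpeak, (div_mul_cancel₀ _ hPpeak.ne').symm, ?_, ?_, ?_⟩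
  · change α₀' + (1 - α₀') ≤ 1
    linarith
  · intro k n
    refine (hspeak k n).trans (mul_le_mul_of_nonneg_right ?_ hPpeak.le)
    linarith
  · refine Finset.sum_le_sum fun k _ => Finset.sum_le_sum fun n _ => ?_
    refine mul_le_mul_of_nonneg_left ?_ ?_
    · exact aux_rate N σ _ _ _ _ _ _ hσ hα₁nn hle (hm k n) (hh1 k n).le (hs k n) (hh2 k n).le
    · rcases hx01 k n with h | h <;> rw [h] <;> norm_num
end
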